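/- As n → ∞, E[vol(T_n)] = 1/2 − (log n)/(3n) + O(n^{−1}); that is, there exist a constant C > 0 and n₀ such that |E[vol(T_n)] − 1/2 + (log n)/(3n)| ≤ C/n for all n ≥ n₀. -/

import Mathlib

open MeasureTheory

noncomputable section

/-- The triangle with vertices (0,0), (1,0), (0,1). -/
def T : Set (ℝ × ℝ) := convexHull ℝ {(0, 0), (1, 0), (0, 1)}

/-- The uniform distribution on `T`: twice Lebesgue measure restricted to `T`. -/
def μT : Measure (ℝ × ℝ) := (2 : ENNReal) • (volume.restrict T)

/-- Joint law of `n` independent uniform points in `T`. -/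
def P (n : ℕ) : Measure (Fin n → ℝ × ℝ) := Measure.pi fun _ => μT

/-- The random convex chain: convex hull of the points together with `(1,0)` and `(0,1)`. -/
def Tchain (n : ℕ) (ω : Fin n → ℝ × ℝ) : Set (ℝ × ℝ) :=
  convexHull ℝ (Set.range ω ∪ {(1, 0), (0, 1)})

/-- Normalized area `V_n = 2 vol(T_n)`. -/
def V (n : ℕ) (ω : Fin n → ℝ × ℝ) : ℝ := 2 * (volume (Tchain n ω)).toReal

/-- Number of vertices of `T_n` other than the two corners. -/
def N (n : ℕ) (ω : Fin n → ℝ × ℝ) : ℕ :=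
  (Set.extremePoints ℝ (Tchain n ω)).ncard - 2

/-- Normalized moments `q_{n,k} = C(n+k,k) E[V_n^k]`. -/
def q (n k : ℕ) : ℝ := ((n + k).choose k : ℝ) * ∫ ω, (V n ω) ^ k ∂ P n

/-- Probability generating function of `N_n`. -/
def G (n : ℕ) (t : ℝ) : ℝ := ∫ ω, t ^ (N n ω) ∂ P n

/-- Harmonic number. -/
def H (j : ℕ) : ℝ := ∑ i ∈ Finset.range j, 1 / ((i : ℝ) + 1)

/-- Generalized harmonic number of order 2. -/
def H2 (j : ℕ) : ℝ := ∑ i ∈ Finset.range j, 1 / ((i : ℝ) + 1) ^ 2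

/-- `c(k,ℓ)`: elementary symmetric polynomial `e_k` of `2/(j(j+1))`, `j = 1,…,ℓ`. -/
def c (k l : ℕ) : ℝ :=
  ∑ S ∈ (Finset.Icc 1 l).powersetCard k, ∏ j ∈ S, 2 / ((j : ℝ) * ((j : ℝ) + 1))

/-!
Fix an interior point `z` of the triangle. If `z` is missed by the chain, then among the lines
`x + k * y = a` through `z` and the points of the chain below it, the one with the least `k`
supports the chain from below, and almost surely it meets the chain in a single point: either
`(1, 0)` or a sample point `w` whose line to `z` leaves both corners strictly above it. Conversely
such a line, rotated slightly, separates `z` from the chain. All other sample points lie above the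
line, which has probability `1 - a ^ 2 / k` for each of them, the complement being a right triangle
with legs `a` and `a / k`. So the probability of missing `z` is a sum over the possible contact
points.

By Tonelli the expected missing area is the integral of this probability over `z`. The corner term
contributes `1 / (2 * (n + 1))`. For a sample contact point, parametrising the pair `(z, w)` by its
line and the two heights (the planar affine Blaschke–Petkantschin formula) and the line by its
intercepts `a` and `b = a / k` reduces the integral to `∫∫ a * b / 3 * (1 - a * b) ^ (n - 1)` over
the unit square, where `∫∫ (1 - a * b) ^ m` is the harmonic number `H_{m + 1}` divided by `m + 1`.
This yields an exact formula for the expected area, whose leading terms are those claimed.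
-/

section Measure

variable {α β : Type*} [MeasurableSpace α] [MeasurableSpace β]

theorem setLIntegral_prod_sections {μ : Measure α} {ν : Measure β} [SFinite ν] {s : Set α}
    {t : α → Set β} (hs : MeasurableSet s)
    (hst : MeasurableSet {p : α × β | p.1 ∈ s ∧ p.2 ∈ t p.1}) {f : α × β → ENNReal}
    (hf : Measurable f) :
    ∫⁻ p in {p : α × β | p.1 ∈ s ∧ p.2 ∈ t p.1}, f p ∂μ.prod ν =
      ∫⁻ x in s, ∫⁻ y in t x, f (x, y) ∂ν ∂μ := by
  rw [← lintegral_indicator hst, lintegral_prod _ (hf.indicator hst).aemeasurable,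
    ← lintegral_indicator hs]
  refine lintegral_congr fun x => ?_
  by_cases hx : x ∈ s
  · have ht : MeasurableSet (t x) := by
      have h := measurable_prodMk_left (x := x) hst
      simpa [Set.preimage, hx] using h
    rw [Set.indicator_of_mem hx, ← lintegral_indicator ht]
    exact lintegral_congr fun y => by by_cases hy : y ∈ t x <;> simp [hx, hy]
  · simp [hx]

theorem measure_pi_const_setOf_forall_mem {ι : Type*} [Fintype ι] (μ : Measure α) [SigmaFinite μ]
    (s : Set α) : Measure.pi (fun _ : ι => μ) {ω | ∀ i, ω i ∈ s} = μ s ^ Fintype.card ι := by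
  rw [show {ω : ι → α | ∀ i, ω i ∈ s} = Set.univ.pi fun _ => s by ext; simp, Measure.pi_pi,
    Finset.prod_const, Finset.card_univ]

theorem measure_pi_const_setOf_forall_ne_rel {m : ℕ} (i : Fin (m + 1)) (μ : Measure α)
    [SigmaFinite μ] {s : Set α} (hs : MeasurableSet s) {R : Set (α × α)} (hR : MeasurableSet R) :
    Measure.pi (fun _ => μ) {ω : Fin (m + 1) → α | ω i ∈ s ∧ ∀ j ≠ i, (ω i, ω j) ∈ R} =
      ∫⁻ w in s, μ (Prod.mk w ⁻¹' R) ^ m ∂μ := by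
  let S : Set (α × (Fin m → α)) := {u | u.1 ∈ s ∧ ∀ j, (u.1, u.2 j) ∈ R}
  have hS : MeasurableSet S := by
    refine (measurable_fst hs).inter (.congr (.iInter fun j => ?_) (Set.ofPred_forall _).symm)
    exact (by fun_prop : Measurable fun u : α × (Fin m → α) => (u.1, u.2 j)) hR
  have hpre : {ω : Fin (m + 1) → α | ω i ∈ s ∧ ∀ j ≠ i, (ω i, ω j) ∈ R} =
      MeasurableEquiv.piFinSuccAbove (fun _ => α) i ⁻¹' S := by
    ext ω
    simp [S, Fin.forall_iff_succAbove i, MeasurableEquiv.piFinSuccAbove_apply, Fin.removeNth]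
  rw [hpre, (measurePreserving_piFinSuccAbove (fun _ => μ) i).measure_preimage
    hS.nullMeasurableSet, Measure.prod_apply hS, ← lintegral_indicator hs]
  refine lintegral_congr fun w => ?_
  by_cases hw : w ∈ s
  · simpa [S, hw] using measure_pi_const_setOf_forall_mem (ι := Fin m) μ (Prod.mk w ⁻¹' R)
  · simp [S, hw]

end Measure

section Real

theorem setLIntegral_Ioo_ofReal {a b : ℝ} (hab : a ≤ b) {g : ℝ → ℝ}
    (hg : ContinuousOn g (Set.Icc a b)) (h0 : ∀ x ∈ Set.Ioo a b, 0 ≤ g x) :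
    ∫⁻ x in Set.Ioo a b, ENNReal.ofReal (g x) = ENNReal.ofReal (∫ x in a..b, g x) := by
  rw [intervalIntegral.integral_of_le hab, integral_Ioc_eq_integral_Ioo,
    ofReal_integral_eq_lintegral_ofReal (hg.integrableOn_Icc.mono_set Set.Ioo_subset_Icc_self)
      ((ae_restrict_mem measurableSet_Ioo).mono h0)]

theorem setLIntegral_Ioi_eq_setLIntegral_Ioo_comp_div {a : ℝ} (ha : 0 < a) (f : ℝ → ENNReal) :
    ∫⁻ k in Set.Ioi a, f k =
      ∫⁻ b in Set.Ioo (0 : ℝ) 1, ENNReal.ofReal (a / b ^ 2) * f (a / b) := by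
  have himg : (fun b => a / b) '' Set.Ioo (0 : ℝ) 1 = Set.Ioi a := by
    ext k
    constructor
    · rintro ⟨b, hb, rfl⟩
      exact (lt_div_iff₀ hb.1).2 (by nlinarith [hb.2])
    · intro hk
      have hk0 : 0 < k := ha.trans hk
      exact ⟨a / k, ⟨by positivity, (div_lt_one hk0).2 hk⟩, by field_simp⟩
  have hderiv : ∀ b ∈ Set.Ioo (0 : ℝ) 1,
      HasDerivWithinAt (fun b => a / b) (-(a / b ^ 2)) (Set.Ioo 0 1) b := fun b hb => by
    simpa [div_eq_mul_inv] using ((hasDerivAt_inv hb.1.ne').const_mul a).hasDerivWithinAt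
  have hinj : Set.InjOn (fun b => a / b) (Set.Ioo (0 : ℝ) 1) := fun b _ b' _ h =>
    by simpa [div_eq_mul_inv, ha.ne'] using h
  rw [← himg, lintegral_image_eq_lintegral_abs_deriv_mul measurableSet_Ioo hderiv hinj]
  refine setLIntegral_congr_fun measurableSet_Ioo fun b _ => ?_
  simp only [abs_neg, abs_of_nonneg (div_nonneg ha.le (sq_nonneg b))]

theorem volume_setOf_linear_eq {α β : ℝ} (h : α ≠ 0 ∨ β ≠ 0) (γ : ℝ) :
    volume {p : ℝ × ℝ | α * p.1 + β * p.2 = γ} = 0 := by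
  have hm : MeasurableSet {p : ℝ × ℝ | α * p.1 + β * p.2 = γ} :=
    measurableSet_eq_fun (by fun_prop) (by fun_prop)
  rw [Measure.volume_eq_prod]
  rcases h with h | h
  · rw [Measure.prod_apply_symm hm]
    refine lintegral_eq_zero_of_ae_eq_zero (.of_forall fun y => ?_)
    refine Set.Subsingleton.measure_zero (fun x hx x' hx' => mul_left_cancel₀ h ?_) _
    exact add_right_cancel (hx.trans hx'.symm)
  · rw [Measure.prod_apply hm]
    refine lintegral_eq_zero_of_ae_eq_zero (.of_forall fun x => ?_)
    refine Set.Subsingleton.measure_zero (fun y hy y' hy' => mul_left_cancel₀ h ?_) _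
    exact add_left_cancel (hy.trans hy'.symm)

theorem lintegral_eq_lintegral_comp_line {y t : ℝ} (h : y ≠ t) {f : ℝ × ℝ → ENNReal}
    (hf : Measurable f) :
    ∫⁻ x, f x =
      ENNReal.ofReal |y - t| * ∫⁻ l : ℝ × ℝ, f (l.1 - l.2 * y, l.1 - l.2 * t) := by
  let L := Matrix.toLin (Module.Basis.finTwoProd ℝ) (Module.Basis.finTwoProd ℝ) !![1, -y; 1, -t]
  have hL : ⇑L = fun l => (l.1 - l.2 * y, l.1 - l.2 * t) := by
    ext l <;> simp [L, Matrix.toLin_finTwoProd_apply] <;> ring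
  have hdet : LinearMap.det L = y - t := by
    simp only [L, LinearMap.det_toLin, Matrix.det_fin_two_of, one_mul, mul_one]
    ring
  have hdet0 : LinearMap.det L ≠ 0 := hdet ▸ sub_ne_zero.2 h
  have hmap := Measure.map_linearMap_addHaar_eq_smul_addHaar (volume : Measure (ℝ × ℝ)) hdet0
  have key : ∫⁻ l : ℝ × ℝ, f (l.1 - l.2 * y, l.1 - l.2 * t) =
      ENNReal.ofReal |(y - t)⁻¹| * ∫⁻ x, f x := by
    rw [← hdet, ← smul_eq_mul, ← lintegral_smul_measure, ← hmap, hL,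
      lintegral_map hf (by fun_prop)]
  rw [key, ← mul_assoc, ← ENNReal.ofReal_mul (abs_nonneg _), ← abs_mul,
    mul_inv_cancel₀ (sub_ne_zero.2 h), abs_one, ENNReal.ofReal_one, one_mul]

theorem lintegral_lintegral_eq_lintegral_line {f : (ℝ × ℝ) × (ℝ × ℝ) → ENNReal}
    (hf : Measurable f) :
    ∫⁻ z : ℝ × ℝ, ∫⁻ w : ℝ × ℝ, f (z, w) =
      ∫⁻ l : ℝ × ℝ, ∫⁻ h : ℝ × ℝ, ENNReal.ofReal |h.1 - h.2| *
        f ((l.1 - l.2 * h.1, h.1), (l.1 - l.2 * h.2, h.2)) := by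
  have hsep : ∫⁻ z : ℝ × ℝ, ∫⁻ w : ℝ × ℝ, f (z, w) =
      ∫⁻ h : ℝ × ℝ, ∫⁻ x : ℝ × ℝ, f ((x.1, h.1), (x.2, h.2)) := by
    simp_rw [Measure.volume_eq_prod]
    rw [lintegral_prod_symm' _ (by fun_prop), lintegral_prod _ (by fun_prop)]
    refine lintegral_congr fun y => ?_
    have hx : ∀ x, ∫⁻ w, f ((x, y), w) ∂volume.prod volume = ∫⁻ t, ∫⁻ x', f ((x, y), (x', t)) :=
      fun x => lintegral_prod_symm' _ (by fun_prop)
    have ht : ∀ t, ∫⁻ x : ℝ × ℝ, f ((x.1, y), (x.2, t)) ∂volume.prod volume =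
        ∫⁻ x, ∫⁻ x', f ((x, y), (x', t)) := fun t => lintegral_prod _ (by fun_prop)
    simp_rw [hx, ht]
    exact lintegral_lintegral_swap (by fun_prop)
  have hdiag : ∀ᵐ h : ℝ × ℝ, h.1 ≠ h.2 := by
    rw [ae_iff]
    convert volume_setOf_linear_eq (α := 1) (β := -1) (by norm_num) 0 using 3 with h
    simp [← sub_eq_add_neg, sub_eq_zero]
  rw [hsep, lintegral_lintegral_swap (μ := volume) (ν := volume) (f := fun l h : ℝ × ℝ =>
    ENNReal.ofReal |h.1 - h.2| * f ((l.1 - l.2 * h.1, h.1), (l.1 - l.2 * h.2, h.2)))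
    (by fun_prop)]
  refine lintegral_congr_ae (hdiag.mono fun h hh => ?_)
  dsimp only
  rw [lintegral_const_mul _ (by fun_prop)]
  exact lintegral_eq_lintegral_comp_line hh
    (by fun_prop : Measurable fun x : ℝ × ℝ => f ((x.1, h.1), (x.2, h.2)))

end Real

section Triangle

/-- The interior of `T`, where the integration over the missed point `z` takes place. -/
def openTriangle : Set (ℝ × ℝ) := {p | 0 < p.1 ∧ 0 < p.2 ∧ p.1 + p.2 < 1}

theorem isOpen_openTriangle : IsOpen openTriangle :=
  (isOpen_lt continuous_const continuous_fst).and <|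
    (isOpen_lt continuous_const continuous_snd).and <|
      isOpen_lt (continuous_fst.add continuous_snd) continuous_const

theorem mem_T_iff {p : ℝ × ℝ} : p ∈ T ↔ 0 ≤ p.1 ∧ 0 ≤ p.2 ∧ p.1 + p.2 ≤ 1 := by
  refine ⟨fun hp => ?_, fun ⟨_, _, _⟩ => ?_⟩
  · have hconv : Convex ℝ {p : ℝ × ℝ | 0 ≤ p.1 ∧ 0 ≤ p.2 ∧ p.1 + p.2 ≤ 1} := by
      rintro u ⟨hu1, hu2, hu3⟩ v ⟨hv1, hv2, hv3⟩ s t hs ht hst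
      simp only [Set.mem_ofPred_eq, Prod.fst_add, Prod.snd_add, Prod.smul_fst, Prod.smul_snd,
        smul_eq_mul]
      refine ⟨by positivity, by positivity, ?_⟩
      nlinarith [mul_le_mul_of_nonneg_left hu3 hs, mul_le_mul_of_nonneg_left hv3 ht]
    refine convexHull_min ?_ hconv hp
    rintro _ (rfl | rfl | rfl) <;> norm_num
  · have hmem : ∀ i, ![((0, 0) : ℝ × ℝ), (1, 0), (0, 1)] i ∈ T := fun i =>
      subset_convexHull ℝ _ (by fin_cases i <;> simp)
    have hsum := (convex_convexHull ℝ _ : Convex ℝ T).sum_mem (t := Finset.univ)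
      (w := ![1 - p.1 - p.2, p.1, p.2]) (by intro i _; fin_cases i <;> simp <;> linarith)
      (by simp [Fin.sum_univ_three]; ring) fun i _ => hmem i
    simpa [T, Fin.sum_univ_three] using hsum

theorem openTriangle_subset_T : openTriangle ⊆ T := fun _ ⟨h1, h2, h3⟩ =>
  mem_T_iff.2 ⟨h1.le, h2.le, h3.le⟩

theorem openTriangle_ae_eq_T : openTriangle =ᵐ[volume] T := by
  refine openTriangle_subset_T.eventuallyLE.antisymm (ae_le_set.2 ?_)
  refine measure_mono_null (t := {p : ℝ × ℝ | 1 * p.1 + 0 * p.2 = 0} ∪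
    {p | 0 * p.1 + 1 * p.2 = 0} ∪ {p | 1 * p.1 + 1 * p.2 = 1}) ?_ ?_
  · rintro p ⟨hpT, hp⟩
    obtain ⟨h1, h2, h3⟩ := mem_T_iff.1 hpT
    simp only [Set.mem_union, Set.mem_ofPred_eq, one_mul, zero_mul, add_zero, zero_add]
    by_contra! hne
    exact hp ⟨h1.lt_of_ne' hne.1.1, h2.lt_of_ne' hne.1.2, h3.lt_of_ne hne.2⟩
  · simp_rw [measure_union_null_iff]
    exact ⟨⟨volume_setOf_linear_eq (by simp) 0, volume_setOf_linear_eq (by simp) 0⟩,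
      volume_setOf_linear_eq (by simp) 1⟩

theorem volume_rightTriangle {a k : ℝ} (ha : 0 < a) (hk : 0 < k) :
    volume {p : ℝ × ℝ | 0 < p.1 ∧ 0 < p.2 ∧ p.1 + k * p.2 < a} =
      ENNReal.ofReal (a ^ 2 / (2 * k)) := by
  have hregion : {p : ℝ × ℝ | 0 < p.1 ∧ 0 < p.2 ∧ p.1 + k * p.2 < a} =
      regionBetween (fun _ => 0) (fun x => (a - x) / k) (Set.Ioo 0 a) := by
    ext p
    simp only [regionBetween, Set.mem_ofPred_eq, Set.mem_Ioo, lt_div_iff₀ hk]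
    constructor
    · rintro ⟨h1, h2, h3⟩
      exact ⟨⟨h1, by nlinarith⟩, h2, by linarith⟩
    · rintro ⟨⟨h1, -⟩, h2, h3⟩
      exact ⟨h1, h2, by linarith⟩
  rw [hregion, Measure.volume_eq_prod, volume_regionBetween_eq_lintegral
    (by fun_prop) (by fun_prop) measurableSet_Ioo]
  simp only [Pi.sub_apply, sub_zero]
  rw [setLIntegral_Ioo_ofReal ha.le (by fun_prop)
    fun x hx => div_nonneg (sub_nonneg.2 hx.2.le) hk.le, intervalIntegral.integral_div,
    intervalIntegral.integral_sub (by simp) (by simp)]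
  congr 1
  simp only [intervalIntegral.integral_const, integral_id, smul_eq_mul]
  field_simp
  ring

theorem volume_openTriangle : volume openTriangle = ENNReal.ofReal (1 / 2) := by
  simpa [openTriangle] using volume_rightTriangle one_pos one_pos

theorem μT_eq_smul_restrict_openTriangle :
    μT = (2 : ENNReal) • volume.restrict openTriangle := by
  rw [μT, Measure.restrict_congr_set openTriangle_ae_eq_T]

theorem μT_absolutelyContinuous : μT ≪ volume :=
  Measure.restrict_le_self.absolutelyContinuous.smul_left 2

instance : IsProbabilityMeasure μT where
  measure_univ := by
    rw [μT_eq_smul_restrict_openTriangle, Measure.smul_apply, Measure.restrict_apply_univ,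
      volume_openTriangle, smul_eq_mul, ← ENNReal.ofReal_ofNat, ← ENNReal.ofReal_mul (by norm_num)]
    norm_num

instance (n : ℕ) : IsProbabilityMeasure (P n) :=
  inferInstanceAs (IsProbabilityMeasure (Measure.pi _))

theorem μT_setOf_linear_le {a k : ℝ} (ha : 0 < a) (ha1 : a ≤ 1) (hak : a ≤ k) :
    μT {p | a ≤ p.1 + k * p.2} = ENNReal.ofReal (1 - a ^ 2 / k) := by
  have hk : 0 < k := ha.trans_le hak
  have hS : MeasurableSet {p : ℝ × ℝ | p.1 + k * p.2 < a} :=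
    measurableSet_lt (by fun_prop) measurable_const
  have hcut : {p : ℝ × ℝ | p.1 + k * p.2 < a} ∩ openTriangle =
      {p : ℝ × ℝ | 0 < p.1 ∧ 0 < p.2 ∧ p.1 + k * p.2 < a} := by
    ext p
    refine ⟨fun ⟨h, h1, h2, _⟩ => ⟨h1, h2, h⟩, fun ⟨h1, h2, h⟩ => ⟨h, h1, h2, ?_⟩⟩
    rcases le_total k 1 with hk1 | hk1
    · nlinarith [mul_nonneg h1.le (sub_nonneg.2 hk1)]
    · nlinarith [mul_nonneg h2.le (sub_nonneg.2 hk1)]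
  have hcompl : {p : ℝ × ℝ | a ≤ p.1 + k * p.2} = {p : ℝ × ℝ | p.1 + k * p.2 < a}ᶜ := by
    ext p; simp
  rw [hcompl, prob_compl_eq_one_sub hS, μT_eq_smul_restrict_openTriangle, Measure.smul_apply,
    Measure.restrict_apply hS, hcut, volume_rightTriangle ha hk, smul_eq_mul,
    ← ENNReal.ofReal_ofNat, ← ENNReal.ofReal_mul (by norm_num),
    ENNReal.ofReal_sub _ (by positivity), ENNReal.ofReal_one]
  congr 2
  field_simp

theorem μT_eq_of_halfPlane_subset {a k : ℝ} (ha : 0 < a) (ha1 : a ≤ 1) (hak : a ≤ k)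
    {S : Set (ℝ × ℝ)} (hlt : {p | a < p.1 + k * p.2} ⊆ S) (hle : S ⊆ {p | a ≤ p.1 + k * p.2}) :
    μT S = ENNReal.ofReal (1 - a ^ 2 / k) := by
  rw [← μT_setOf_linear_le ha ha1 hak]
  refine (measure_mono hle).antisymm (measure_mono_ae (ae_le_set.2 ?_))
  refine measure_mono_null (t := {p : ℝ × ℝ | 1 * p.1 + k * p.2 = a}) (fun p ⟨hp, hpS⟩ => ?_)
    (μT_absolutelyContinuous (volume_setOf_linear_eq (by simp) a))
  rw [Set.mem_ofPred_eq, one_mul]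
  exact (not_lt.1 fun h => hpS (hlt h)).antisymm hp

end Triangle

section Separation

theorem notMem_convexHull_iff_exists_forall_lt {E : Type*} [AddCommGroup E] [Module ℝ E]
    [TopologicalSpace E] [IsTopologicalAddGroup E] [ContinuousSMul ℝ E] [LocallyConvexSpace ℝ E]
    {A : Set E} (hA : IsClosed (convexHull ℝ A)) {z : E} :
    z ∉ convexHull ℝ A ↔ ∃ f : StrongDual ℝ E, ∀ p ∈ A, f z < f p := by
  refine ⟨fun hz => ?_, fun ⟨f, hf⟩ hz => ?_⟩
  · obtain ⟨f, u, hzu, hu⟩ := geometric_hahn_banach_point_closed (convex_convexHull ℝ A) hA hz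
    exact ⟨f, fun p hp => hzu.trans (hu p (subset_convexHull ℝ A hp))⟩
  · exact lt_irrefl (f z) <|
      convexHull_min (t := {p | f z < f p}) hf (convex_halfSpace_gt f.toLinearMap.isLinear _) hz

theorem notMem_convexHull_iff_exists_slope {A : Set (ℝ × ℝ)} (hA : IsClosed (convexHull ℝ A))
    (h10 : (1, 0) ∈ A) (h01 : (0, 1) ∈ A) {z : ℝ × ℝ} (hz : z ∈ openTriangle) :
    z ∉ convexHull ℝ A ↔ ∃ k : ℝ, ∀ p ∈ A, z.1 + k * z.2 < p.1 + k * p.2 := by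
  rw [notMem_convexHull_iff_exists_forall_lt hA]
  constructor
  · rintro ⟨f, hf⟩
    obtain ⟨hz1, hz2, hz3⟩ := hz
    have hf_eq : ∀ p : ℝ × ℝ, f p = f (1, 0) * p.1 + f (0, 1) * p.2 := fun p => by
      conv_lhs => rw [show p = p.1 • ((1, 0) : ℝ × ℝ) + p.2 • ((0, 1) : ℝ × ℝ) by ext <;> simp]
      simp only [map_add, map_smul, smul_eq_mul, mul_comm]
    have hfz : 0 < f z * (1 - (z.1 + z.2)) := by
      nlinarith [hf_eq z, mul_lt_mul_of_pos_right (hf _ h10) hz1,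
        mul_lt_mul_of_pos_right (hf _ h01) hz2]
    have hpos : 0 < f (1, 0) :=
      ((mul_pos_iff_of_pos_right (sub_pos.2 hz3)).1 hfz).trans (hf _ h10)
    refine ⟨f (0, 1) / f (1, 0), fun p hp => lt_of_mul_lt_mul_left ?_ hpos.le⟩
    have hscale : ∀ p : ℝ × ℝ, f (1, 0) * (p.1 + f (0, 1) / f (1, 0) * p.2) = f p := fun p => by
      rw [hf_eq p]; field_simp
    simpa only [hscale] using hf p hp
  · rintro ⟨k, hk⟩
    exact ⟨.fst ℝ ℝ ℝ + k • .snd ℝ ℝ ℝ, by simpa using hk⟩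

theorem notMem_Tchain_iff_exists_slope {n : ℕ} {ω : Fin n → ℝ × ℝ} {z : ℝ × ℝ}
    (hz : z ∈ openTriangle) :
    z ∉ Tchain n ω ↔
      ∃ k : ℝ, ∀ p ∈ Set.range ω ∪ {(1, 0), (0, 1)}, z.1 + k * z.2 < p.1 + k * p.2 :=
  notMem_convexHull_iff_exists_slope
    (((Set.finite_range ω).union (Set.toFinite _)).isClosed_convexHull ℝ) (by simp) (by simp) hz

theorem exists_slope_of_touching_below {A : Set (ℝ × ℝ)} (hA : A.Finite) {z : ℝ × ℝ} {k : ℝ}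
    (h : ∀ p ∈ A, z.1 + k * z.2 < p.1 + k * p.2 ∨
      p.2 < z.2 ∧ z.1 + k * z.2 = p.1 + k * p.2) :
    ∃ k' : ℝ, ∀ p ∈ A, z.1 + k' * z.2 < p.1 + k' * p.2 := by
  have hev : ∀ᶠ k' in nhdsWithin k (Set.Iio k), ∀ p ∈ A, z.1 + k' * z.2 < p.1 + k' * p.2 := by
    refine (Filter.eventually_all_finite hA).2 fun p hp => ?_
    rcases h p hp with hlt | ⟨hpz, heq⟩
    · exact nhdsWithin_le_nhds <|
        (by fun_prop : Continuous fun k' => z.1 + k' * z.2).continuousAt.eventually_lt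
          (by fun_prop : Continuous fun k' => p.1 + k' * p.2).continuousAt hlt
    · filter_upwards [self_mem_nhdsWithin] with k' hk'
      nlinarith [mul_pos (sub_pos.2 (Set.mem_Iio.1 hk')) (sub_pos.2 hpz)]
  exact hev.exists

theorem notMem_Tchain_of_touching_below {n : ℕ} {ω : Fin n → ℝ × ℝ} {z : ℝ × ℝ}
    (hz : z ∈ openTriangle) {k : ℝ} (h : ∀ p ∈ Set.range ω ∪ {(1, 0), (0, 1)},
      z.1 + k * z.2 < p.1 + k * p.2 ∨ p.2 < z.2 ∧ z.1 + k * z.2 = p.1 + k * p.2) :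
    z ∉ Tchain n ω :=
  (notMem_Tchain_iff_exists_slope hz).2 <|
    exists_slope_of_touching_below ((Set.finite_range ω).union (Set.toFinite _)) h

end Separation

section Tangent

/-- The `k` for which `z` and `w` lie on a common line `x + k * y = a`; a junk value if `z` and `w`
have the same height. -/
def lineCoeff (z w : ℝ × ℝ) : ℝ := (w.1 - z.1) / (z.2 - w.2)

/-- The `a` for which the line through `z` and `w` is `x + k * y = a`, where `k = lineCoeff z w`. -/
def lineLevel (z w : ℝ × ℝ) : ℝ := z.1 + lineCoeff z w * z.2

/-- The points `w` below `z` whose line to `z` leaves `(1, 0)` and `(0, 1)` strictly above it: the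
possible contact points of the right tangent from `z` to a chain missing `z`. -/
def tangentRegion (z : ℝ × ℝ) : Set (ℝ × ℝ) :=
  {w | w.2 < z.2 ∧ lineLevel z w < 1 ∧ lineLevel z w < lineCoeff z w}

/-- The pairs `(w, p)` such that `p` lies strictly above the line through `z` and `w`. -/
def strictlyAbove (z : ℝ × ℝ) : Set ((ℝ × ℝ) × (ℝ × ℝ)) :=
  {u | lineLevel z u.1 < u.2.1 + lineCoeff z u.1 * u.2.2}

/-- The pairs `(w, p)` such that `p` lies on or above the line through `z` and `w`. -/
def weaklyAbove (z : ℝ × ℝ) : Set ((ℝ × ℝ) × (ℝ × ℝ)) :=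
  {u | lineLevel z u.1 ≤ u.2.1 + lineCoeff z u.1 * u.2.2}

/-- All sample points stand in relation `R` to the corner `(1, 0)`; used with
`R = strictlyAbove z` and `R = weaklyAbove z`, when `(1, 0)` is the contact point. -/
def cornerEvent (n : ℕ) (R : Set ((ℝ × ℝ) × (ℝ × ℝ))) : Set (Fin n → ℝ × ℝ) :=
  {ω | ∀ j, ((1, 0), ω j) ∈ R}

/-- The `i`-th sample point is an admissible contact point for `z`, and all others stand in relation
`R` to it; used with `R = strictlyAbove z` and `R = weaklyAbove z`. -/
def pointEvent (n : ℕ) (z : ℝ × ℝ) (R : Set ((ℝ × ℝ) × (ℝ × ℝ))) (i : Fin n) :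
    Set (Fin n → ℝ × ℝ) :=
  {ω | ω i ∈ tangentRegion z ∧ ∀ j ≠ i, (ω i, ω j) ∈ R}

variable {n : ℕ} {z w p : ℝ × ℝ}

theorem lt_lineCoeff_iff (h : p.2 < z.2) {k : ℝ} :
    k < lineCoeff z p ↔ z.1 + k * z.2 < p.1 + k * p.2 := by
  rw [lineCoeff, lt_div_iff₀ (sub_pos.2 h)]
  constructor <;> intro <;> linarith

theorem le_lineCoeff_iff (h : p.2 < z.2) {k : ℝ} :
    k ≤ lineCoeff z p ↔ z.1 + k * z.2 ≤ p.1 + k * p.2 := by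
  rw [lineCoeff, le_div_iff₀ (sub_pos.2 h)]
  constructor <;> intro <;> linarith

theorem lineLevel_eq (h : w.2 < z.2) : lineLevel z w = w.1 + lineCoeff z w * w.2 := by
  have := sub_ne_zero.2 h.ne'
  rw [lineLevel, lineCoeff]
  field_simp
  ring

theorem lineCoeff_corner : lineCoeff z (1, 0) = (1 - z.1) / z.2 := by simp [lineCoeff]

theorem lineLevel_corner (hz : z.2 ≠ 0) : lineLevel z (1, 0) = 1 := by
  rw [lineLevel, lineCoeff_corner]
  field_simp
  ring

theorem one_lt_lineCoeff_corner (hz : z ∈ openTriangle) : 1 < lineCoeff z (1, 0) := by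
  rw [lineCoeff_corner, one_lt_div hz.2.1]
  linarith [hz.2.2]

theorem lineCoeff_pos_of_mem_tangentRegion (hz : z ∈ openTriangle) (hw : w ∈ tangentRegion z) :
    0 < lineCoeff z w := by
  obtain ⟨hz1, -, hz3⟩ := hz
  have hlevel : z.1 + lineCoeff z w * z.2 < lineCoeff z w := hw.2.2
  exact (mul_pos_iff_of_pos_right (by linarith : 0 < 1 - z.2)).1 (by linarith)

theorem exists_contact_point {A : Set (ℝ × ℝ)} (hA : A.Finite) {k : ℝ}
    (hk : ∀ p ∈ A, z.1 + k * z.2 < p.1 + k * p.2) (hbelow : ∃ p ∈ A, p.2 < z.2) :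
    ∃ w ∈ A, w.2 < z.2 ∧ k < lineCoeff z w ∧ ∀ p ∈ A, (w, p) ∈ weaklyAbove z := by
  obtain ⟨w, ⟨hwA, hwz⟩, hmin⟩ := Set.exists_min_image {p ∈ A | p.2 < z.2} (lineCoeff z)
    (hA.subset (Set.sep_subset _ _)) hbelow
  have hkw : k < lineCoeff z w := (lt_lineCoeff_iff hwz).2 (hk w hwA)
  refine ⟨w, hwA, hwz, hkw, fun p hp => ?_⟩
  rcases lt_or_ge p.2 z.2 with hpz | hpz
  · exact (le_lineCoeff_iff hpz).1 (hmin p ⟨hp, hpz⟩)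
  · change z.1 + lineCoeff z w * z.2 ≤ p.1 + lineCoeff z w * p.2
    nlinarith [hk p hp, mul_nonneg (sub_nonneg.2 hkw.le) (sub_nonneg.2 hpz)]

theorem setOf_notMem_Tchain_subset (hz : z ∈ openTriangle) :
    {ω | z ∉ Tchain n ω} ⊆
      cornerEvent n (weaklyAbove z) ∪ ⋃ i, pointEvent n z (weaklyAbove z) i := by
  intro ω hω
  obtain ⟨k, hk⟩ := (notMem_Tchain_iff_exists_slope hz).1 hω
  obtain ⟨w, hwA, hwz, hkw, hw⟩ :=
    exists_contact_point ((Set.finite_range ω).union (Set.toFinite _)) hk ⟨(1, 0), by simp, hz.2.1⟩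
  have hsample : ∀ j, (w, ω j) ∈ weaklyAbove z := fun j => hw _ (by simp)
  have h10 : lineLevel z w ≤ 1 := by simpa [weaklyAbove] using hw (1, 0) (by simp)
  rcases h10.lt_or_eq with hlt | heq
  · right
    have h01 : lineLevel z w < lineCoeff z w := by
      have hk01 : z.1 + k * z.2 < k := by simpa using hk (0, 1) (by simp)
      obtain ⟨hz1, -, hz3⟩ := hz
      rw [lineLevel]
      nlinarith
    obtain ⟨i, rfl⟩ | rfl | rfl := hwA
    · exact Set.mem_iUnion.2 ⟨i, ⟨hwz, hlt, h01⟩, fun j _ => hsample j⟩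
    · exact absurd (lineLevel_corner hz.2.1.ne') hlt.ne
    · exact absurd hwz (by linarith [hz.1, hz.2.2] : ¬ (1 : ℝ) < z.2)
  · left
    have hcorner : lineCoeff z w = lineCoeff z (1, 0) := by
      rw [lineCoeff_corner, eq_div_iff hz.2.1.ne', ← heq, lineLevel, add_sub_cancel_left]
    intro j
    simpa only [weaklyAbove, Set.mem_ofPred_eq, lineLevel, hcorner] using hsample j

theorem subset_setOf_notMem_Tchain (hz : z ∈ openTriangle) :
    cornerEvent n (strictlyAbove z) ∪ ⋃ i, pointEvent n z (strictlyAbove z) i ⊆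
      {ω | z ∉ Tchain n ω} := by
  have hcorner : z.1 + lineCoeff z (1, 0) * z.2 = 1 := lineLevel_corner hz.2.1.ne'
  have hone := one_lt_lineCoeff_corner hz
  refine Set.union_subset (fun ω hω => ?_) (Set.iUnion_subset fun i ω ⟨⟨hi, h10, h01⟩, hω⟩ => ?_)
  · refine notMem_Tchain_of_touching_below hz (k := lineCoeff z (1, 0)) ?_
    rintro p (⟨j, rfl⟩ | rfl | rfl)
    · exact .inl (hω j)
    · exact .inr ⟨hz.2.1, by simpa using hcorner⟩
    · exact .inl (by simpa [hcorner] using hone)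
  · refine notMem_Tchain_of_touching_below hz (k := lineCoeff z (ω i)) ?_
    rintro p (⟨j, rfl⟩ | rfl | rfl)
    · obtain rfl | hj := eq_or_ne j i
      · exact .inr ⟨hi, lineLevel_eq hi⟩
      · exact .inl (hω j hj)
    · exact .inl (by simpa [lineLevel] using h10)
    · exact .inl (by simpa [lineLevel] using h01)

theorem pairwise_disjoint_pointEvent :
    Pairwise (Function.onFun Disjoint (pointEvent n z (strictlyAbove z))) := fun i j hij =>
  Set.disjoint_left.2 fun _ hi hj =>
    lt_asymm ((lt_lineCoeff_iff hj.1.1).2 (hi.2 j hij.symm))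
      ((lt_lineCoeff_iff hi.1.1).2 (hj.2 i hij))

theorem disjoint_cornerEvent_iUnion_pointEvent (hz : z ∈ openTriangle) :
    Disjoint (cornerEvent n (strictlyAbove z)) (⋃ i, pointEvent n z (strictlyAbove z) i) := by
  refine Set.disjoint_iUnion_right.2 fun i => Set.disjoint_left.2 fun ω hcorner hi => ?_
  have hslope : lineCoeff z (1, 0) < lineCoeff z (ω i) :=
    (lt_lineCoeff_iff hi.1.1).2 (hcorner i)
  have hlevel : lineLevel z (ω i) < lineLevel z (1, 0) :=
    hi.1.2.1.trans_eq (lineLevel_corner hz.2.1.ne').symm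
  exact hlevel.not_gt (by simpa [lineLevel] using mul_lt_mul_of_pos_right hslope hz.2.1)

end Tangent

section MissProbability

variable {n m : ℕ} {z w : ℝ × ℝ} {R : Set ((ℝ × ℝ) × (ℝ × ℝ))}

/-- The probability that `m + 1` uniform points leave the point `z` of the open triangle outside
their convex chain: the first summand belongs to the contact point `(1, 0)`, the second one to the
`m + 1` sample points. -/
def missProb (m : ℕ) (z : ℝ × ℝ) : ENNReal :=
  ENNReal.ofReal (1 - z.2 / (1 - z.1)) ^ (m + 1) +
    (m + 1 : ℕ) *
      ∫⁻ w in tangentRegion z, ENNReal.ofReal (1 - lineLevel z w ^ 2 / lineCoeff z w) ^ m ∂μT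

theorem measurable_lineCoeff : Measurable fun u : (ℝ × ℝ) × (ℝ × ℝ) => lineCoeff u.1 u.2 := by
  unfold lineCoeff
  fun_prop

theorem measurable_lineLevel : Measurable fun u : (ℝ × ℝ) × (ℝ × ℝ) => lineLevel u.1 u.2 := by
  unfold lineLevel lineCoeff
  fun_prop

theorem measurableSet_setOf_mem_tangentRegion :
    MeasurableSet {u : (ℝ × ℝ) × (ℝ × ℝ) | u.2 ∈ tangentRegion u.1} := by
  unfold tangentRegion
  exact (measurableSet_lt measurable_snd.snd measurable_fst.snd).inter <|
    (measurableSet_lt measurable_lineLevel measurable_const).inter <|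
      measurableSet_lt measurable_lineLevel measurable_lineCoeff

theorem measurableSet_tangentRegion : MeasurableSet (tangentRegion z) :=
  measurable_prodMk_left (x := z) measurableSet_setOf_mem_tangentRegion

theorem measurableSet_strictlyAbove : MeasurableSet (strictlyAbove z) := by
  unfold strictlyAbove lineLevel lineCoeff
  exact measurableSet_lt (by fun_prop) (by fun_prop)

theorem measurableSet_weaklyAbove : MeasurableSet (weaklyAbove z) := by
  unfold weaklyAbove lineLevel lineCoeff
  exact measurableSet_le (by fun_prop) (by fun_prop)

theorem strictlyAbove_subset_weaklyAbove : strictlyAbove z ⊆ weaklyAbove z :=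
  fun _ => le_of_lt (α := ℝ)

theorem measurableSet_pointEvent (hRm : MeasurableSet R) (i : Fin n) :
    MeasurableSet (pointEvent n z R i) := by
  have hinter : pointEvent n z R i = (fun ω => ω i) ⁻¹' tangentRegion z ∩
      ⋂ j, ⋂ (_ : j ≠ i), (fun ω => (ω i, ω j)) ⁻¹' R := by
    ext
    simp [pointEvent]
  rw [hinter]
  exact (measurable_pi_apply i measurableSet_tangentRegion).inter <|
    .iInter fun j => .iInter fun _ =>
      (by fun_prop : Measurable fun ω : Fin n → ℝ × ℝ => (ω i, ω j)) hRm

theorem μT_preimage_prodMk (hR : strictlyAbove z ⊆ R) (hR' : R ⊆ weaklyAbove z)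
    (hpos : 0 < lineLevel z w) (hone : lineLevel z w ≤ 1) (hle : lineLevel z w ≤ lineCoeff z w) :
    μT (Prod.mk w ⁻¹' R) = ENNReal.ofReal (1 - lineLevel z w ^ 2 / lineCoeff z w) :=
  μT_eq_of_halfPlane_subset hpos hone hle (fun _ hp => hR hp) (fun _ hp => hR' hp)

theorem P_cornerEvent (hz : z ∈ openTriangle) (hR : strictlyAbove z ⊆ R)
    (hR' : R ⊆ weaklyAbove z) :
    P n (cornerEvent n R) = ENNReal.ofReal (1 - z.2 / (1 - z.1)) ^ n := by
  have hlevel := lineLevel_corner hz.2.1.ne'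
  have hmeas := μT_preimage_prodMk hR hR' (one_pos.trans_eq hlevel.symm) hlevel.le
    (hlevel.trans_lt (one_lt_lineCoeff_corner hz)).le
  rw [hlevel, lineCoeff_corner, one_pow, one_div_div] at hmeas
  simpa [P, cornerEvent, hmeas] using
    measure_pi_const_setOf_forall_mem (ι := Fin n) μT (Prod.mk (1, 0) ⁻¹' R)

theorem P_pointEvent (hz : z ∈ openTriangle) (hRm : MeasurableSet R) (hR : strictlyAbove z ⊆ R)
    (hR' : R ⊆ weaklyAbove z) (i : Fin (m + 1)) :
    P (m + 1) (pointEvent (m + 1) z R i) =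
      ∫⁻ w in tangentRegion z,
        ENNReal.ofReal (1 - lineLevel z w ^ 2 / lineCoeff z w) ^ m ∂μT := by
  refine (measure_pi_const_setOf_forall_ne_rel i μT measurableSet_tangentRegion hRm).trans
    (setLIntegral_congr_fun measurableSet_tangentRegion fun w hw => ?_)
  have hpos : 0 < lineLevel z w :=
    add_pos hz.1 (mul_pos (lineCoeff_pos_of_mem_tangentRegion hz hw) hz.2.1)
  simp only [μT_preimage_prodMk hR hR' hpos hw.2.1.le hw.2.2.le]

theorem P_cornerEvent_add_sum_pointEvent (hz : z ∈ openTriangle) (hRm : MeasurableSet R)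
    (hR : strictlyAbove z ⊆ R) (hR' : R ⊆ weaklyAbove z) :
    P (m + 1) (cornerEvent (m + 1) R) + ∑ i, P (m + 1) (pointEvent (m + 1) z R i) =
      missProb m z := by
  simp only [P_cornerEvent hz hR hR', P_pointEvent hz hRm hR hR', Finset.sum_const,
    Finset.card_univ, Fintype.card_fin, nsmul_eq_mul, missProb]

theorem P_setOf_notMem_Tchain (hz : z ∈ openTriangle) :
    P (m + 1) {ω | z ∉ Tchain (m + 1) ω} = missProb m z := by
  apply le_antisymm
  · rw [← P_cornerEvent_add_sum_pointEvent hz measurableSet_weaklyAbove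
      strictlyAbove_subset_weaklyAbove subset_rfl]
    exact (measure_mono (setOf_notMem_Tchain_subset hz)).trans <|
      (measure_union_le _ _).trans (add_le_add_right (measure_iUnion_fintype_le _ _) _)
  · have hmeas (i) : MeasurableSet (pointEvent (m + 1) z (strictlyAbove z) i) :=
      measurableSet_pointEvent measurableSet_strictlyAbove i
    rw [← P_cornerEvent_add_sum_pointEvent hz measurableSet_strictlyAbove subset_rfl
      strictlyAbove_subset_weaklyAbove, ← tsum_fintype (L := .unconditional _),
      ← measure_iUnion pairwise_disjoint_pointEvent hmeas,
      ← measure_union (disjoint_cornerEvent_iUnion_pointEvent hz) (.iUnion hmeas)]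
    exact measure_mono (subset_setOf_notMem_Tchain hz)

end MissProbability

section Integral

theorem integral_one_sub_div_pow {b : ℝ} (hb : b ≠ 0) (m : ℕ) :
    ∫ y in 0..b, (1 - y / b) ^ m = b / (m + 1) := by
  rw [intervalIntegral.integral_comp_sub_div (fun x => x ^ m) hb, zero_div, div_self hb,
    sub_self, sub_zero, integral_pow]
  simp [div_eq_mul_inv]

theorem setLIntegral_openTriangle_one_sub_div_pow (m : ℕ) :
    ∫⁻ z in openTriangle, ENNReal.ofReal (1 - z.2 / (1 - z.1)) ^ m =
      ENNReal.ofReal (1 / (2 * (m + 1))) := by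
  have hregion : openTriangle = {z | z.1 ∈ Set.Ioo 0 1 ∧ z.2 ∈ Set.Ioo 0 (1 - z.1)} := by
    ext z
    simp only [openTriangle, Set.mem_ofPred_eq, Set.mem_Ioo, lt_sub_iff_add_lt']
    constructor
    · rintro ⟨h1, h2, h3⟩
      exact ⟨⟨h1, by linarith⟩, h2, h3⟩
    · rintro ⟨⟨h1, -⟩, h2, h3⟩
      exact ⟨h1, h2, h3⟩
  have hinner : ∀ x ∈ Set.Ioo (0 : ℝ) 1,
      ∫⁻ y in Set.Ioo 0 (1 - x), ENNReal.ofReal (1 - y / (1 - x)) ^ m =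
        ENNReal.ofReal ((1 - x) / (m + 1)) := fun x hx => by
    have hx' : 0 < 1 - x := sub_pos.2 hx.2
    have hnonneg : ∀ y ∈ Set.Ioo 0 (1 - x), 0 ≤ 1 - y / (1 - x) := fun y hy =>
      sub_nonneg.2 ((div_le_one hx').2 hy.2.le)
    rw [← integral_one_sub_div_pow hx'.ne', ← setLIntegral_Ioo_ofReal hx'.le (by fun_prop)
      fun y hy => pow_nonneg (hnonneg y hy) m]
    exact setLIntegral_congr_fun measurableSet_Ioo fun y hy =>
      (ENNReal.ofReal_pow (hnonneg y hy) m).symm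
  rw [hregion, Measure.volume_eq_prod, setLIntegral_prod_sections
    (t := fun x => Set.Ioo 0 (1 - x)) measurableSet_Ioo
    (hregion ▸ isOpen_openTriangle.measurableSet) (by fun_prop),
    setLIntegral_congr_fun measurableSet_Ioo hinner,
    setLIntegral_Ioo_ofReal zero_le_one (by fun_prop)
      fun x hx => div_nonneg (sub_nonneg.2 hx.2.le) (by positivity),
    intervalIntegral.integral_div, intervalIntegral.integral_sub (by simp) (by simp)]
  congr 1
  simp only [intervalIntegral.integral_const, integral_id, smul_eq_mul]
  field_simp
  norm_num

/-- The pairs of heights `0 < t < y < b`, recorded as `(y, t)`. -/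
def heightPairs (b : ℝ) : Set (ℝ × ℝ) := {h | h.1 ∈ Set.Ioo 0 b ∧ h.2 ∈ Set.Ioo 0 h.1}

theorem measurableSet_heightPairs (b : ℝ) : MeasurableSet (heightPairs b) := by
  unfold heightPairs Set.Ioo
  measurability

theorem setLIntegral_heightPairs_abs_sub {b : ℝ} (hb : 0 ≤ b) :
    ∫⁻ h in heightPairs b, ENNReal.ofReal |h.1 - h.2| = ENNReal.ofReal (b ^ 3 / 6) := by
  have hinner : ∀ y ∈ Set.Ioo 0 b,
      ∫⁻ t in Set.Ioo 0 y, ENNReal.ofReal |y - t| = ENNReal.ofReal (y ^ 2 / 2) := fun y hy => by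
    have habs : ∀ t ∈ Set.Ioo 0 y, ENNReal.ofReal |y - t| = ENNReal.ofReal (y - t) :=
      fun t ht => by rw [abs_of_pos (sub_pos.2 ht.2)]
    rw [setLIntegral_congr_fun measurableSet_Ioo habs,
      setLIntegral_Ioo_ofReal hy.1.le (by fun_prop) fun t ht => sub_nonneg.2 ht.2.le,
      intervalIntegral.integral_comp_sub_left (fun t => t) y, integral_id]
    simp
  rw [heightPairs, Measure.volume_eq_prod, setLIntegral_prod_sections
      (t := fun y => Set.Ioo 0 y) measurableSet_Ioo (measurableSet_heightPairs b) (by fun_prop),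
    setLIntegral_congr_fun measurableSet_Ioo hinner,
    setLIntegral_Ioo_ofReal hb (by fun_prop) fun y _ => by positivity,
    intervalIntegral.integral_div, integral_pow]
  push_cast
  ring_nf

theorem lineCoeff_line {a k y t : ℝ} (h : y ≠ t) :
    lineCoeff (a - k * y, y) (a - k * t, t) = k := by
  rw [lineCoeff, div_eq_iff (sub_ne_zero.2 h)]
  ring

theorem lineLevel_line {a k y t : ℝ} (h : y ≠ t) :
    lineLevel (a - k * y, y) (a - k * t, t) = a := by
  rw [lineLevel, lineCoeff_line h]
  ring

/-- The pairs `(z, w)` in the open triangle for which `w` is an admissible contact point of `z`. -/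
def tangentPairs : Set ((ℝ × ℝ) × (ℝ × ℝ)) :=
  {u | u.1 ∈ openTriangle ∧ u.2 ∈ openTriangle ∧ u.2 ∈ tangentRegion u.1}

theorem measurableSet_tangentPairs : MeasurableSet tangentPairs :=
  (measurable_fst isOpen_openTriangle.measurableSet).inter <|
    (measurable_snd isOpen_openTriangle.measurableSet).inter measurableSet_setOf_mem_tangentRegion

/-- The pairs `(a, k)` for which the line `x + k * y = a` is a tangent from a point of the open
triangle to an admissible contact point. -/
def tangentLines : Set (ℝ × ℝ) := {l | l.1 ∈ Set.Ioo 0 1 ∧ l.2 ∈ Set.Ioi l.1}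

theorem measurableSet_tangentLines : MeasurableSet tangentLines := by
  unfold tangentLines Set.Ioo Set.Ioi
  measurability

theorem line_mem_openTriangle {a k y : ℝ} (ha : a ∈ Set.Ioo 0 1) (hk : a < k)
    (hy : y ∈ Set.Ioo 0 (a / k)) : (a - k * y, y) ∈ openTriangle := by
  have hk0 : 0 < k := ha.1.trans hk
  have hky : k * y < a := by
    have := (lt_div_iff₀ hk0).1 hy.2
    linarith
  refine ⟨sub_pos.2 hky, hy.1, ?_⟩
  change a - k * y + y < 1
  rcases le_total k 1 with hk1 | hk1
  · refine lt_of_mul_lt_mul_left ?_ hk0.le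
    nlinarith [mul_nonneg (sub_nonneg.2 hk1) (sub_nonneg.2 hky.le)]
  · nlinarith [ha.2, hy.1]

theorem line_mem_tangentPairs_iff {a k y t : ℝ} :
    ((a - k * y, y), (a - k * t, t)) ∈ tangentPairs ↔
      (a, k) ∈ tangentLines ∧ (y, t) ∈ heightPairs (a / k) := by
  constructor
  · rintro ⟨⟨hz1, hz2, hz3⟩, ⟨hw1, hw2, hw3⟩, hlt, hone, hk⟩
    dsimp only at hz1 hz2 hz3 hw1 hw2 hw3 hlt
    rw [lineLevel_line hlt.ne'] at hone hk
    rw [lineCoeff_line hlt.ne'] at hk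
    have hk0 : 0 < k := by nlinarith
    refine ⟨⟨⟨by nlinarith, hone⟩, hk⟩, ⟨hz2, ?_⟩, hw2, hlt⟩
    rw [lt_div_iff₀ hk0]
    linarith
  · rintro ⟨⟨ha, hk⟩, hy, ht⟩
    refine ⟨line_mem_openTriangle ha hk hy,
      line_mem_openTriangle ha hk ⟨ht.1, ht.2.trans hy.2⟩, ht.2, ?_, ?_⟩
    · rw [lineLevel_line ht.2.ne']
      exact ha.2
    · rw [lineLevel_line ht.2.ne', lineCoeff_line ht.2.ne']
      exact hk

theorem setLIntegral_tangentRegion_eq_lintegral_indicator {F : ℝ × ℝ → ENNReal}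
    (hF : Measurable F) :
    ∫⁻ z in openTriangle, ∫⁻ w in tangentRegion z, F (lineLevel z w, lineCoeff z w) ∂μT =
      2 * ∫⁻ z, ∫⁻ w,
        tangentPairs.indicator (fun u => F (lineLevel u.1 u.2, lineCoeff u.1 u.2)) (z, w) := by
  have hmeas : Measurable fun u : (ℝ × ℝ) × (ℝ × ℝ) => F (lineLevel u.1 u.2, lineCoeff u.1 u.2) :=
    hF.comp (measurable_lineLevel.prodMk measurable_lineCoeff)
  rw [← lintegral_indicator isOpen_openTriangle.measurableSet,
    ← lintegral_const_mul _ (by have := hmeas.indicator measurableSet_tangentPairs; fun_prop)]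
  refine lintegral_congr fun z => ?_
  by_cases hz : z ∈ openTriangle
  · rw [Set.indicator_of_mem hz, μT_eq_smul_restrict_openTriangle, Measure.restrict_smul,
      lintegral_smul_measure, Measure.restrict_restrict measurableSet_tangentRegion,
      ← lintegral_indicator (measurableSet_tangentRegion.inter isOpen_openTriangle.measurableSet),
      smul_eq_mul]
    congr 1
    refine lintegral_congr fun w => ?_
    by_cases hw : w ∈ tangentRegion z ∩ openTriangle
    · have hu : (z, w) ∈ tangentPairs := ⟨hz, hw.symm⟩
      rw [Set.indicator_of_mem hw, Set.indicator_of_mem hu]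
    · rw [Set.indicator_of_notMem hw, Set.indicator_of_notMem fun hu => hw hu.2.symm]
  · simp [tangentPairs, hz]

theorem lintegral_indicator_tangentPairs (F : ℝ × ℝ → ENNReal) (l : ℝ × ℝ) :
    ∫⁻ h : ℝ × ℝ, ENNReal.ofReal |h.1 - h.2| *
        tangentPairs.indicator (fun u => F (lineLevel u.1 u.2, lineCoeff u.1 u.2))
          ((l.1 - l.2 * h.1, h.1), (l.1 - l.2 * h.2, h.2)) =
      tangentLines.indicator (fun l => ENNReal.ofReal ((l.1 / l.2) ^ 3 / 6) * F l) l := by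
  by_cases hl : l ∈ tangentLines
  · have hb : 0 ≤ l.1 / l.2 := div_nonneg hl.1.1.le (hl.1.1.trans hl.2).le
    rw [Set.indicator_of_mem hl, ← setLIntegral_heightPairs_abs_sub hb,
      ← lintegral_mul_const _ (by fun_prop), ← lintegral_indicator (measurableSet_heightPairs _)]
    refine lintegral_congr fun h => ?_
    by_cases hh : h ∈ heightPairs (l.1 / l.2)
    · have hne : h.1 ≠ h.2 := hh.2.2.ne'
      rw [Set.indicator_of_mem (line_mem_tangentPairs_iff.2 ⟨hl, hh⟩), Set.indicator_of_mem hh,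
        lineLevel_line hne, lineCoeff_line hne]
    · rw [Set.indicator_of_notMem fun hu => hh (line_mem_tangentPairs_iff.1 hu).2,
        Set.indicator_of_notMem hh, mul_zero]
  · rw [Set.indicator_of_notMem hl]
    refine lintegral_eq_zero_of_ae_eq_zero (.of_forall fun h => ?_)
    dsimp only
    rw [Set.indicator_of_notMem fun hu => hl (line_mem_tangentPairs_iff.1 hu).1, mul_zero,
      Pi.zero_apply]

theorem setLIntegral_tangentRegion_eq_setLIntegral_lines {F : ℝ × ℝ → ENNReal}
    (hF : Measurable F) :
    ∫⁻ z in openTriangle, ∫⁻ w in tangentRegion z, F (lineLevel z w, lineCoeff z w) ∂μT =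
      2 * ∫⁻ a in Set.Ioo (0 : ℝ) 1, ∫⁻ k in Set.Ioi a,
        ENNReal.ofReal ((a / k) ^ 3 / 6) * F (a, k) := by
  have hmeas : Measurable fun u : (ℝ × ℝ) × (ℝ × ℝ) => F (lineLevel u.1 u.2, lineCoeff u.1 u.2) :=
    hF.comp (measurable_lineLevel.prodMk measurable_lineCoeff)
  rw [setLIntegral_tangentRegion_eq_lintegral_indicator hF,
    lintegral_lintegral_eq_lintegral_line (hmeas.indicator measurableSet_tangentPairs),
    lintegral_congr (lintegral_indicator_tangentPairs F),
    lintegral_indicator measurableSet_tangentLines, tangentLines, Measure.volume_eq_prod,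
    setLIntegral_prod_sections (t := Set.Ioi) measurableSet_Ioo measurableSet_tangentLines
      (by fun_prop)]

-- Here `a` and `b` are the intercepts of the line through `z` and `w` on the two axes.
theorem setLIntegral_tangentRegion_eq_setLIntegral_square {F : ℝ × ℝ → ENNReal}
    (hF : Measurable F) :
    ∫⁻ z in openTriangle, ∫⁻ w in tangentRegion z, F (lineLevel z w, lineCoeff z w) ∂μT =
      ∫⁻ a in Set.Ioo (0 : ℝ) 1, ∫⁻ b in Set.Ioo (0 : ℝ) 1,
        ENNReal.ofReal (a * b / 3) * F (a, a / b) := by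
  rw [setLIntegral_tangentRegion_eq_setLIntegral_lines hF, ← lintegral_const_mul' _ _ (by simp)]
  refine setLIntegral_congr_fun measurableSet_Ioo fun a ha => ?_
  rw [setLIntegral_Ioi_eq_setLIntegral_Ioo_comp_div ha.1, ← lintegral_const_mul _ (by fun_prop)]
  refine setLIntegral_congr_fun measurableSet_Ioo fun b hb => ?_
  have ha0 := ha.1
  have hb0 := hb.1
  rw [← mul_assoc, ← mul_assoc, ← ENNReal.ofReal_ofNat, ← ENNReal.ofReal_mul (by norm_num),
    ← ENNReal.ofReal_mul (by positivity)]
  congr 2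
  field_simp
  norm_num

end Integral

section Harmonic

theorem integral_one_sub_mul_pow (a : ℝ) (m : ℕ) :
    ∫ b in (0 : ℝ)..1, (1 - a * b) ^ m = (∑ j ∈ Finset.range (m + 1), (1 - a) ^ j) / (m + 1) := by
  rcases eq_or_ne a 0 with rfl | ha
  · simp [div_self (Nat.cast_add_one_ne_zero (R := ℝ) m)]
  · have hgeom : (∑ j ∈ Finset.range (m + 1), (1 - a) ^ j) = (1 - (1 - a) ^ (m + 1)) / a := by
      rw [eq_div_iff ha, ← geom_sum_mul_neg, sub_sub_cancel]
    rw [intervalIntegral.integral_comp_sub_mul (fun x => x ^ m) ha, integral_pow, hgeom]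
    simp only [mul_zero, mul_one, sub_zero, one_pow, smul_eq_mul]
    field_simp

theorem integral_integral_one_sub_mul_pow (m : ℕ) :
    ∫ a in (0 : ℝ)..1, ∫ b in (0 : ℝ)..1, (1 - a * b) ^ m = (harmonic (m + 1) : ℝ) / (m + 1) := by
  have hpow (j : ℕ) : ∫ a in (0 : ℝ)..1, (1 - a) ^ j = ((j + 1 : ℕ) : ℝ)⁻¹ := by
    rw [intervalIntegral.integral_comp_sub_left (fun x => x ^ j), integral_pow]
    simp
  simp_rw [integral_one_sub_mul_pow]
  rw [intervalIntegral.integral_div, intervalIntegral.integral_finsetSum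
    fun j _ => (by fun_prop : Continuous fun a : ℝ => (1 - a) ^ j).intervalIntegrable _ _,
    Finset.sum_congr rfl fun j _ => hpow j]
  simp [harmonic]

theorem continuous_integral_mul_one_sub_mul_pow (m : ℕ) :
    Continuous fun a : ℝ => ∫ b in (0 : ℝ)..1, a * b / 3 * (1 - a * b) ^ m :=
  intervalIntegral.continuous_parametric_intervalIntegral_of_continuous' (by fun_prop) 0 1

theorem integral_integral_mul_one_sub_mul_pow (m : ℕ) :
    ∫ a in (0 : ℝ)..1, ∫ b in (0 : ℝ)..1, a * b / 3 * (1 - a * b) ^ m =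
      ((harmonic (m + 1) : ℝ) / (m + 1) - (harmonic (m + 2) : ℝ) / (m + 2)) / 3 := by
  have hint (j : ℕ) (a : ℝ) :
      IntervalIntegrable (fun b : ℝ => (1 - a * b) ^ j) volume 0 1 :=
    (by fun_prop : Continuous fun b : ℝ => (1 - a * b) ^ j).intervalIntegrable _ _
  have hint' (j : ℕ) :
      IntervalIntegrable (fun a : ℝ => ∫ b in (0 : ℝ)..1, (1 - a * b) ^ j) volume 0 1 :=
    (intervalIntegral.continuous_parametric_intervalIntegral_of_continuous'
      (by fun_prop) 0 1).intervalIntegrable _ _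
  have hsplit (a b : ℝ) :
      a * b / 3 * (1 - a * b) ^ m = ((1 - a * b) ^ m - (1 - a * b) ^ (m + 1)) / 3 := by ring
  simp_rw [hsplit, intervalIntegral.integral_div]
  simp_rw [fun a => intervalIntegral.integral_sub (hint m a) (hint (m + 1) a)]
  rw [intervalIntegral.integral_sub (hint' m) (hint' (m + 1)), integral_integral_one_sub_mul_pow,
    integral_integral_one_sub_mul_pow]
  push_cast
  ring

theorem mul_one_sub_mul_pow_nonneg {a b : ℝ} (ha : a ∈ Set.Icc 0 1) (hb : b ∈ Set.Icc 0 1)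
    (m : ℕ) : 0 ≤ a * b / 3 * (1 - a * b) ^ m := by
  have hle : a * b ≤ 1 := mul_le_one₀ ha.2 hb.1 hb.2
  exact mul_nonneg (div_nonneg (mul_nonneg ha.1 hb.1) zero_le_three)
    (pow_nonneg (sub_nonneg.2 hle) m)

theorem setLIntegral_square_mul_one_sub_mul_pow (m : ℕ) :
    ∫⁻ a in Set.Ioo (0 : ℝ) 1, ∫⁻ b in Set.Ioo (0 : ℝ) 1,
        ENNReal.ofReal (a * b / 3) * ENNReal.ofReal (1 - a * b) ^ m =
      ENNReal.ofReal
        (((harmonic (m + 1) : ℝ) / (m + 1) - (harmonic (m + 2) : ℝ) / (m + 2)) / 3) := by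
  have hinner : ∀ a ∈ Set.Ioo (0 : ℝ) 1, ∫⁻ b in Set.Ioo (0 : ℝ) 1,
      ENNReal.ofReal (a * b / 3) * ENNReal.ofReal (1 - a * b) ^ m =
        ENNReal.ofReal (∫ b in (0 : ℝ)..1, a * b / 3 * (1 - a * b) ^ m) := fun a ha => by
    rw [← setLIntegral_Ioo_ofReal zero_le_one (by fun_prop) fun b hb =>
      mul_one_sub_mul_pow_nonneg (Set.Ioo_subset_Icc_self ha) (Set.Ioo_subset_Icc_self hb) m]
    refine setLIntegral_congr_fun measurableSet_Ioo fun b hb => ?_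
    have hprod : 0 ≤ a * b / 3 := div_nonneg (mul_nonneg ha.1.le hb.1.le) zero_le_three
    have hsub : 0 ≤ 1 - a * b := sub_nonneg.2 (mul_le_one₀ ha.2.le hb.1.le hb.2.le)
    simp only [ENNReal.ofReal_mul hprod, ENNReal.ofReal_pow hsub]
  rw [setLIntegral_congr_fun measurableSet_Ioo hinner,
    setLIntegral_Ioo_ofReal zero_le_one (continuous_integral_mul_one_sub_mul_pow m).continuousOn
      fun a ha => intervalIntegral.integral_nonneg zero_le_one fun b hb =>
        mul_one_sub_mul_pow_nonneg (Set.Ioo_subset_Icc_self ha) hb m,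
    integral_integral_mul_one_sub_mul_pow]

theorem harmonic_div_sub_harmonic_succ_div (m : ℕ) :
    (harmonic (m + 1) : ℝ) / (m + 1) - (harmonic (m + 2) : ℝ) / (m + 2) =
      ((m + 2) * (harmonic (m + 1) : ℝ) - (m + 1)) / ((m + 1) * (m + 2) ^ 2) := by
  rw [harmonic_succ (m + 1)]
  push_cast
  field_simp
  ring

theorem harmonic_div_sub_harmonic_succ_div_nonneg (m : ℕ) :
    0 ≤ (harmonic (m + 1) : ℝ) / (m + 1) - (harmonic (m + 2) : ℝ) / (m + 2) := by
  have hint := integral_integral_mul_one_sub_mul_pow m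
  have hnonneg : 0 ≤ ∫ a in (0 : ℝ)..1, ∫ b in (0 : ℝ)..1, a * b / 3 * (1 - a * b) ^ m :=
    intervalIntegral.integral_nonneg zero_le_one fun a ha =>
      intervalIntegral.integral_nonneg zero_le_one fun b hb => mul_one_sub_mul_pow_nonneg ha hb m
  linarith

theorem setLIntegral_missProb (m : ℕ) :
    ∫⁻ z in openTriangle, missProb m z =
      ENNReal.ofReal (1 / (2 * (m + 2)) +
        (m + 1) * (((harmonic (m + 1) : ℝ) / (m + 1) - (harmonic (m + 2) : ℝ) / (m + 2)) / 3)) := by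
  have hcontact : ∫⁻ z in openTriangle, ∫⁻ w in tangentRegion z,
      ENNReal.ofReal (1 - lineLevel z w ^ 2 / lineCoeff z w) ^ m ∂μT =
        ENNReal.ofReal
          (((harmonic (m + 1) : ℝ) / (m + 1) - (harmonic (m + 2) : ℝ) / (m + 2)) / 3) := by
    rw [setLIntegral_tangentRegion_eq_setLIntegral_square
      (F := fun l => ENNReal.ofReal (1 - l.1 ^ 2 / l.2) ^ m) (by fun_prop),
      ← setLIntegral_square_mul_one_sub_mul_pow]
    refine setLIntegral_congr_fun measurableSet_Ioo fun a ha =>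
      setLIntegral_congr_fun measurableSet_Ioo fun b hb => ?_
    have ha0 := ha.1.ne'
    have hb0 := hb.1.ne'
    dsimp only
    congr 4
    field_simp
  have hnonneg := harmonic_div_sub_harmonic_succ_div_nonneg m
  unfold missProb
  rw [lintegral_add_left (by fun_prop), setLIntegral_openTriangle_one_sub_div_pow,
    lintegral_const_mul' _ _ (by simp), hcontact,
    ENNReal.ofReal_add (by positivity) (by positivity), ENNReal.ofReal_mul (by positivity),
    ← ENNReal.ofReal_natCast]
  push_cast
  ring_nf

end Harmonic

section Expectation

variable {n : ℕ} {ω : Fin n → ℝ × ℝ}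

theorem isCompact_Tchain : IsCompact (Tchain n ω) :=
  ((Set.finite_range ω).union (Set.toFinite _)).isCompact_convexHull ℝ

theorem Tchain_subset_T (hω : ∀ i, ω i ∈ T) : Tchain n ω ⊆ T := by
  refine convexHull_min ?_ (convex_convexHull ℝ _)
  rintro _ (⟨i, rfl⟩ | rfl | rfl)
  · exact hω i
  · exact subset_convexHull ℝ _ (by simp)
  · exact subset_convexHull ℝ _ (by simp)

theorem ae_forall_mem_T : ∀ᵐ ω ∂P n, ∀ i, ω i ∈ T := by
  have hμT : ∀ᵐ w ∂μT, w ∈ T := by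
    rw [μT_eq_smul_restrict_openTriangle]
    exact Measure.ae_smul_measure ((ae_restrict_mem isOpen_openTriangle.measurableSet).mono
      fun _ hw => openTriangle_subset_T hw) 2
  exact ae_all_iff.2 fun i =>
    (measurePreserving_eval (fun _ : Fin n => μT) i).quasiMeasurePreserving.ae hμT

theorem volume_Tchain_toReal (hω : ∀ i, ω i ∈ T) :
    (volume (Tchain n ω)).toReal = 1 / 2 - (volume (openTriangle \ Tchain n ω)).toReal := by
  have hinter : (openTriangle ∩ Tchain n ω : Set (ℝ × ℝ)) =ᵐ[volume] Tchain n ω := by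
    simpa only [Set.inter_eq_right.2 (Tchain_subset_T hω)] using
      openTriangle_ae_eq_T.inter (Filter.EventuallyEq.refl _ (Tchain n ω))
  have hsplit := measureReal_sdiff_add_inter (μ := volume) (s := openTriangle)
    (isCompact_Tchain (ω := ω)).measurableSet (by simp [volume_openTriangle])
  rw [measureReal_congr hinter] at hsplit
  simp only [Measure.real, volume_openTriangle] at hsplit
  rw [ENNReal.toReal_ofReal (by norm_num)] at hsplit
  linarith

theorem isOpen_setOf_notMem_Tchain (n : ℕ) :
    IsOpen {u : (Fin n → ℝ × ℝ) × (ℝ × ℝ) | u.2 ∈ openTriangle \ Tchain n u.1} := by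
  have hunion : {u : (Fin n → ℝ × ℝ) × (ℝ × ℝ) | u.2 ∈ openTriangle \ Tchain n u.1} =
      ⋃ k : ℝ, {u | u.2 ∈ openTriangle ∧ u.2.1 + k * u.2.2 < 1 ∧ u.2.1 + k * u.2.2 < k ∧
        ∀ i, u.2.1 + k * u.2.2 < (u.1 i).1 + k * (u.1 i).2} := by
    ext u
    simp only [Set.mem_ofPred_eq, Set.mem_iUnion, Set.mem_sdiff, exists_and_left]
    refine and_congr_right fun hu => (notMem_Tchain_iff_exists_slope hu).trans ?_
    simp [or_imp, forall_and]
  rw [hunion]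
  refine isOpen_iUnion fun k => (isOpen_openTriangle.preimage continuous_snd).and <|
    (isOpen_lt (by fun_prop) (by fun_prop)).and <| (isOpen_lt (by fun_prop) (by fun_prop)).and ?_
  simp only [Set.ofPred_forall]
  exact isOpen_iInter_of_finite fun i => isOpen_lt (by fun_prop) (by fun_prop)

theorem measurable_volume_sdiff_Tchain :
    Measurable fun ω : Fin n → ℝ × ℝ => volume (openTriangle \ Tchain n ω) :=
  measurable_measure_prodMk_left (isOpen_setOf_notMem_Tchain n).measurableSet

theorem lintegral_volume_sdiff_Tchain (m : ℕ) :
    ∫⁻ ω, volume (openTriangle \ Tchain (m + 1) ω) ∂P (m + 1) =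
      ∫⁻ z in openTriangle, missProb m z := by
  have hmeas := (isOpen_setOf_notMem_Tchain (m + 1)).measurableSet
  refine (Measure.prod_apply (μ := P (m + 1)) hmeas).symm.trans ?_
  rw [Measure.prod_apply_symm hmeas, ← lintegral_indicator isOpen_openTriangle.measurableSet]
  refine lintegral_congr fun z => ?_
  by_cases hz : z ∈ openTriangle
  · simp [hz, ← P_setOf_notMem_Tchain hz, Set.preimage]
  · simp [hz]

theorem integral_volume_Tchain (hn : n ≠ 0) :
    ∫ ω, (volume (Tchain n ω)).toReal ∂P n =
      1 / 2 - 1 / (2 * (n + 1)) - ((n + 1) * (harmonic n : ℝ) - n) / (3 * (n + 1) ^ 2) := by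
  obtain ⟨m, rfl⟩ := Nat.exists_eq_succ_of_ne_zero hn
  have hmissed := (lintegral_volume_sdiff_Tchain m).trans (setLIntegral_missProb m)
  have hfin : ∀ ω, volume (openTriangle \ Tchain (m + 1) ω) < ⊤ := fun ω =>
    (measure_mono Set.sdiff_subset).trans_lt (volume_openTriangle ▸ ENNReal.ofReal_lt_top)
  have hint : Integrable (fun ω => (volume (openTriangle \ Tchain (m + 1) ω)).toReal) (P (m + 1)) :=
    integrable_toReal_of_lintegral_ne_top measurable_volume_sdiff_Tchain.aemeasurable
      (hmissed ▸ ENNReal.ofReal_ne_top)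
  rw [integral_congr_ae (ae_forall_mem_T.mono fun _ => volume_Tchain_toReal),
    integral_sub (integrable_const _) hint,
    integral_toReal measurable_volume_sdiff_Tchain.aemeasurable (.of_forall hfin), hmissed,
    ENNReal.toReal_ofReal (by have := harmonic_div_sub_harmonic_succ_div_nonneg m; positivity),
    harmonic_div_sub_harmonic_succ_div]
  simp only [integral_const, probReal_univ, one_smul]
  push_cast
  field_simp
  ring

theorem abs_expansion_error_le {x L h : ℝ} (hx : 0 < x) (hL : 0 ≤ L) (hLx : L ≤ x) (hLh : L ≤ h)
    (hhL : h ≤ 1 + L) :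
    |1 / 2 - 1 / (2 * (x + 1)) - ((x + 1) * h - x) / (3 * (x + 1) ^ 2) - 1 / 2 + L / (3 * x)| ≤
      1 / x := by
  have hdecomp : 1 / 2 - 1 / (2 * (x + 1)) - ((x + 1) * h - x) / (3 * (x + 1) ^ 2) - 1 / 2 +
      L / (3 * x) =
        (L / x + x / (x + 1)) / 3 / (x + 1) - (1 / 2 + (h - L) / 3) / (x + 1) := by
    field_simp
    ring
  have hLx' : L / x ≤ 1 := (div_le_one hx).2 hLx
  have hx' : x / (x + 1) ≤ 1 := (div_le_one (by positivity)).2 (by linarith)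
  have : 0 ≤ h - L := sub_nonneg.2 hLh
  rw [hdecomp]
  exact abs_sub_le_of_nonneg_of_le
    (by positivity) (div_le_div₀ zero_le_one (by linarith) hx (by linarith))
    (by positivity) (div_le_div₀ zero_le_one (by linarith) hx (by linarith))

end Expectation

/-- `E[vol(T_n)] = 1/2 - (log n)/(3n) + O(n⁻¹)`. -/
theorem stmt17 :
    ∃ C > (0 : ℝ), ∃ n₀ : ℕ, ∀ n ≥ n₀,
      |(∫ ω, (volume (Tchain n ω)).toReal ∂ P n) - 1 / 2 + Real.log n / (3 * n)|
        ≤ C / n := by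
  refine ⟨1, one_pos, 1, fun n hn => ?_⟩
  have hn1 : (1 : ℝ) ≤ n := by exact_mod_cast hn
  have hlog_le : Real.log n ≤ n := (Real.log_le_sub_one_of_pos (by linarith)).trans (by linarith)
  have hlog_le_harmonic : Real.log n ≤ harmonic n :=
    (Real.log_le_log (by linarith) (by simp)).trans (log_add_one_le_harmonic n)
  rw [integral_volume_Tchain (by lia)]
  exact abs_expansion_error_le (by linarith) (Real.log_natCast_nonneg n) hlog_le hlog_le_harmonic
    (harmonic_le_one_add_log n)

end
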